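/- The Kolmogorov–Sinai entropy of the shift on D^ℕ with respect to the Bernoulli measure p^ℕ equals the Shannon entropy H(p) = −Σ_{d∈D} p(d) log p(d). -/

import Mathlib

open MeasureTheory Finset

variable {X : Type*} [MeasurableSpace X]

/-- The Shannon entropy of the partition of `X` obtained by joining the preimages of a
finite partition `P` under the first `k` iterates of `T`:
`H(P ∨ T⁻¹P ∨ ⋯ ∨ T^{-(k-1)}P) = −∑ μ(C) log μ(C)` over cells
`C = ⋂_{i<k} T^{-i}(a i)` with `a i ∈ P`. -/
noncomputable def joinEntropy (T : X → X) (μ : Measure X)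
    (P : Finset (Set X)) (k : ℕ) : ℝ :=
  -∑ a ∈ Fintype.piFinset (fun _ : Fin k => P),
      (μ (⋂ i : Fin k, (T^[(i : ℕ)]) ⁻¹' a i)).toReal
        * Real.log (μ (⋂ i : Fin k, (T^[(i : ℕ)]) ⁻¹' a i)).toReal

/-- A finite measurable partition of `X`. -/
def IsFinPartition (P : Finset (Set X)) : Prop :=
  (∀ A ∈ P, MeasurableSet A) ∧ ((P : Set (Set X)).PairwiseDisjoint id) ∧
    ⋃₀ (P : Set (Set X)) = Set.univ

/-- The Kolmogorov–Sinai (measure-theoretic) entropy of `T` with respect to `μ`: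
the supremum over finite measurable partitions `P` of
`lim_k H(P ∨ ⋯ ∨ T^{-(k-1)}P)/k` (the limit exists by subadditivity; we use `liminf`). -/
noncomputable def ksEntropy (T : X → X) (μ : Measure X) : ℝ :=
  ⨆ P : {P : Finset (Set X) // IsFinPartition P},
    Filter.liminf (fun k : ℕ => joinEntropy T μ P.1 k / k) Filter.atTop

/-!
For a finite-valued map `f` let `h(T, f)` be the entropy of `T` relative to the partition into the
fibres of `f`. If this partition is a generator, every measurable `A` is approximated by an event
`B` depending on finitely many of the symbols `f (T^n x)`, and the conditional entropy of `A` given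
`B` is at most the binary entropy of `μ (A ∆ B)`. Hence `H(g | f, f ∘ T, …, f ∘ T^(n-1)) → 0` for
each finite-valued `g`. Since `h(T, g)` exceeds `h(T, f)` by at most this conditional entropy, `f`
attains the supremum defining the entropy of `T`. The time-zero coordinate generates the Bernoulli
shift, and as the coordinates are independent, the first `n` of them have joint entropy `n * H(p)`.
-/

section NegMulLog

open Real

variable {ι α β : Type*}

theorem negMulLog_sum_le (s : Finset ι) (q : ι → ℝ) (hq : ∀ i ∈ s, 0 ≤ q i) :
    negMulLog (∑ i ∈ s, q i) ≤ ∑ i ∈ s, negMulLog (q i) := by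
  simp only [negMulLog, ← Finset.sum_neg_distrib, Finset.sum_mul]
  refine Finset.sum_le_sum fun i hi => ?_
  rcases (hq i hi).eq_or_lt with h | h
  · simp [← h]
  · have hlog : log (q i) ≤ log (∑ i ∈ s, q i) := log_le_log h (Finset.single_le_sum hq hi)
    exact mul_le_mul_of_nonpos_left hlog (neg_nonpos.2 h.le)

theorem negMulLog_add_mul_log_le {q w Q W : ℝ} (hq : 0 ≤ q) (hw : 0 ≤ w) (hwq : w = 0 → q = 0)
    (hqQ : q ≤ Q) (hwW : w ≤ W) :
    negMulLog q + q * log w ≤ q * (log W - log Q) + (w * (Q / W) - q) := by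
  rcases hq.eq_or_lt with rfl | hq
  · simpa using mul_nonneg hw (div_nonneg hqQ (hw.trans hwW))
  have hw : 0 < w := hw.lt_of_ne fun h => hq.ne' (hwq h.symm)
  have hQ : 0 < Q := hq.trans_le hqQ
  have hW : 0 < W := hw.trans_le hwW
  have hlog : log (w * Q / (q * W)) ≤ w * Q / (q * W) - 1 := log_le_sub_one_of_pos (by positivity)
  rw [log_div (by positivity) (by positivity), log_mul hw.ne' hQ.ne', log_mul hq.ne' hW.ne'] at hlog
  calc negMulLog q + q * log w
      = q * (log W - log Q) + q * (log w + log Q - (log q + log W)) := by rw [negMulLog]; ring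
    _ ≤ q * (log W - log Q) + q * (w * Q / (q * W) - 1) := by gcongr
    _ = q * (log W - log Q) + (w * (Q / W) - q) := by field_simp

/-- The log-sum inequality, written with `negMulLog q + q * log w = -q * log (q / w)`. -/
theorem sum_negMulLog_add_mul_log_le (s : Finset ι) (q w : ι → ℝ) (hq : ∀ i ∈ s, 0 ≤ q i)
    (hw : ∀ i ∈ s, 0 ≤ w i) (hwq : ∀ i ∈ s, w i = 0 → q i = 0) :
    ∑ i ∈ s, (negMulLog (q i) + q i * log (w i))
      ≤ negMulLog (∑ i ∈ s, q i) + (∑ i ∈ s, q i) * log (∑ i ∈ s, w i) := by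
  set Q := ∑ i ∈ s, q i
  set W := ∑ i ∈ s, w i
  have hQW : W = 0 → Q = 0 := fun h =>
    Finset.sum_eq_zero fun i hi => hwq i hi ((Finset.sum_eq_zero_iff_of_nonneg hw).1 h i hi)
  calc ∑ i ∈ s, (negMulLog (q i) + q i * log (w i))
      ≤ ∑ i ∈ s, (q i * (log W - log Q) + (w i * (Q / W) - q i)) :=
        Finset.sum_le_sum fun i hi => negMulLog_add_mul_log_le (hq i hi) (hw i hi) (hwq i hi)
          (Finset.single_le_sum hq hi) (Finset.single_le_sum hw hi)
    _ = Q * (log W - log Q) + (W * (Q / W) - Q) := by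
        rw [Finset.sum_add_distrib, Finset.sum_sub_distrib, ← Finset.sum_mul, ← Finset.sum_mul]
    _ = negMulLog Q + Q * log W := by rw [mul_div_cancel_of_imp' hQW, negMulLog]; ring

theorem sum_negMulLog_sub_negMulLog_sum_le [Fintype α] (s : Finset β) (q : α → β → ℝ)
    (hq : ∀ a b, 0 ≤ q a b) :
    ∑ b ∈ s, (∑ a, negMulLog (q a b) - negMulLog (∑ a, q a b))
      ≤ ∑ a, negMulLog (∑ b ∈ s, q a b) - negMulLog (∑ a, ∑ b ∈ s, q a b) := by
  set w : β → ℝ := fun b => ∑ a, q a b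
  have hcol : ∀ b, w b = 0 → ∀ a, q a b = 0 := fun b h a =>
    (Finset.sum_eq_zero_iff_of_nonneg fun a _ => hq a b).1 h a (Finset.mem_univ a)
  calc ∑ b ∈ s, (∑ a, negMulLog (q a b) - negMulLog (w b))
      = ∑ a, ∑ b ∈ s, (negMulLog (q a b) + q a b * log (w b)) := by
        rw [Finset.sum_comm]
        refine Finset.sum_congr rfl fun b _ => ?_
        rw [Finset.sum_add_distrib, ← Finset.sum_mul, negMulLog, neg_mul, sub_neg_eq_add]
    _ ≤ ∑ a, (negMulLog (∑ b ∈ s, q a b) + (∑ b ∈ s, q a b) * log (∑ b ∈ s, w b)) :=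
        Finset.sum_le_sum fun a _ => sum_negMulLog_add_mul_log_le s (q a) w (fun b _ => hq a b)
          (fun b _ => Finset.sum_nonneg fun a _ => hq a b) fun b _ h => hcol b h a
    _ = ∑ a, negMulLog (∑ b ∈ s, q a b) - negMulLog (∑ a, ∑ b ∈ s, q a b) := by
        rw [Finset.sum_add_distrib, ← Finset.sum_mul, negMulLog, Finset.sum_comm (s := s)]
        ring

end NegMulLog

section Entropy

variable {α β γ : Type*}

theorem measureReal_preimage_comp_singleton [DecidableEq α] [Fintype β] [MeasurableSpace β]
    [MeasurableSingletonClass β] (μ : Measure X) [IsFiniteMeasure μ] {g : X → β}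
    (hg : Measurable g) (φ : β → α) (a : α) :
    μ.real ((φ ∘ g) ⁻¹' {a}) = ∑ b with φ b = a, μ.real (g ⁻¹' {b}) := by
  rw [sum_measureReal_preimage_singleton _ fun b _ => hg (measurableSet_singleton b)]
  congr 1
  ext x
  simp

variable [Fintype α] [Fintype β] [Fintype γ]

/-- The Shannon entropy of the partition of the probability space `(X, μ)` into the fibres of the
finite-valued map `f`, that is, of the random variable `f`. -/
noncomputable def entropy (μ : Measure X) (f : X → α) : ℝ :=
  ∑ a, Real.negMulLog (μ.real (f ⁻¹' {a}))

/-- The conditional Shannon entropy `H(f | g)` of the finite-valued map `f` given `g`, encoded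
through the chain rule as `H(f, g) - H(g)`. -/
noncomputable def condEntropy (μ : Measure X) (f : X → α) (g : X → β) : ℝ :=
  entropy μ (fun x => (f x, g x)) - entropy μ g

theorem entropy_nonneg (μ : Measure X) [IsZeroOrProbabilityMeasure μ] (f : X → α) :
    0 ≤ entropy μ f :=
  Finset.sum_nonneg fun _ _ => Real.negMulLog_nonneg measureReal_nonneg measureReal_le_one

theorem entropy_mem (μ : Measure X) [IsProbabilityMeasure μ] {A : Set X} (hA : MeasurableSet A) :
    entropy μ (· ∈ A) = Real.binEntropy (μ.real A) := by
  have hTrue : (· ∈ A) ⁻¹' {True} = A := by ext; simp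
  have hFalse : (· ∈ A) ⁻¹' {False} = Aᶜ := by ext; simp
  rw [entropy, Fintype.univ_Prop]
  simp [hTrue, hFalse, probReal_compl_eq_one_sub hA,
    Real.binEntropy_eq_negMulLog_add_negMulLog_one_sub]

variable [MeasurableSpace β] [MeasurableSingletonClass β]

theorem entropy_comp_le (μ : Measure X) [IsFiniteMeasure μ] {g : X → β} (hg : Measurable g)
    (φ : β → α) : entropy μ (φ ∘ g) ≤ entropy μ g := by
  classical
  calc entropy μ (φ ∘ g)
      = ∑ a, Real.negMulLog (∑ b with φ b = a, μ.real (g ⁻¹' {b})) := by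
        simp only [entropy, measureReal_preimage_comp_singleton μ hg]
    _ ≤ ∑ a, ∑ b with φ b = a, Real.negMulLog (μ.real (g ⁻¹' {b})) :=
        Finset.sum_le_sum fun a _ => negMulLog_sum_le _ _ fun _ _ => measureReal_nonneg
    _ = entropy μ g := Finset.sum_fiberwise _ _ _

theorem entropy_le_of_factorsThrough (μ : Measure X) [IsProbabilityMeasure μ] {f : X → α}
    {g : X → β} (hg : Measurable g) (h : f.FactorsThrough g) : entropy μ f ≤ entropy μ g := by
  have : Nonempty α := μ.nonempty_of_neZero.map f
  obtain ⟨φ, rfl⟩ := (Function.factorsThrough_iff f).1 h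
  exact entropy_comp_le μ hg φ

variable [MeasurableSpace α] [MeasurableSingletonClass α]

theorem entropy_congr (μ : Measure X) [IsProbabilityMeasure μ] {f : X → α} {g : X → β}
    (hf : Measurable f) (hg : Measurable g) (h : ∀ x y, f x = f y ↔ g x = g y) :
    entropy μ f = entropy μ g :=
  le_antisymm (entropy_le_of_factorsThrough μ hg fun x y => (h x y).2)
    (entropy_le_of_factorsThrough μ hf fun x y => (h x y).1)

theorem condEntropy_eq_sum (μ : Measure X) [IsFiniteMeasure μ] {f : X → α} {g : X → β}
    (hf : Measurable f) (hg : Measurable g) :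
    condEntropy μ f g
      = ∑ b, (∑ a, Real.negMulLog (μ.real ((fun x => (f x, g x)) ⁻¹' {(a, b)}))
          - Real.negMulLog (∑ a, μ.real ((fun x => (f x, g x)) ⁻¹' {(a, b)}))) := by
  classical
  have hmarginal : ∀ b, μ.real (g ⁻¹' {b})
      = ∑ a, μ.real ((fun x => (f x, g x)) ⁻¹' {(a, b)}) := fun b => by
    refine (measureReal_preimage_comp_singleton μ (hf.prodMk hg) Prod.snd b).trans ?_
    simp [Finset.sum_filter, Fintype.sum_prod_type]
  rw [condEntropy, entropy, entropy, Fintype.sum_prod_type_right, ← Finset.sum_sub_distrib]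
  simp only [hmarginal]

variable [MeasurableSpace γ] [MeasurableSingletonClass γ]

theorem condEntropy_le_condEntropy_comp (μ : Measure X) [IsFiniteMeasure μ] {f : X → α}
    {g : X → β} (hf : Measurable f) (hg : Measurable g) (φ : β → γ) :
    condEntropy μ f g ≤ condEntropy μ f (φ ∘ g) := by
  classical
  set q : α → β → ℝ := fun a b => μ.real ((fun x => (f x, g x)) ⁻¹' {(a, b)})
  have hjoint : ∀ a c, μ.real ((fun x => (f x, (φ ∘ g) x)) ⁻¹' {(a, c)})
      = ∑ b with φ b = c, q a b := fun a c => by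
    refine (measureReal_preimage_comp_singleton μ (hf.prodMk hg) (Prod.map id φ) (a, c)).trans ?_
    simp [Finset.sum_filter, Fintype.sum_prod_type, ite_and, q]
  rw [condEntropy_eq_sum μ hf hg, condEntropy_eq_sum μ hf (Measurable.of_discrete.comp hg)]
  simp only [hjoint]
  rw [← Finset.sum_fiberwise (g := φ)]
  exact Finset.sum_le_sum fun c _ =>
    sum_negMulLog_sub_negMulLog_sum_le _ q fun _ _ => measureReal_nonneg

theorem condEntropy_le_of_factorsThrough (μ : Measure X) [IsProbabilityMeasure μ] {f : X → α}
    {g : X → β} {h : X → γ} (hf : Measurable f) (hg : Measurable g) (hgh : h.FactorsThrough g) :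
    condEntropy μ f g ≤ condEntropy μ f h := by
  have : Nonempty γ := μ.nonempty_of_neZero.map h
  obtain ⟨φ, rfl⟩ := (Function.factorsThrough_iff h).1 hgh
  exact condEntropy_le_condEntropy_comp μ hf hg φ

theorem condEntropy_le_entropy (μ : Measure X) [IsProbabilityMeasure μ] {f : X → α} {g : X → β}
    (hf : Measurable f) (hg : Measurable g) : condEntropy μ f g ≤ entropy μ f := by
  have hconst : entropy μ (fun _ : X => ()) = 0 := by simp [entropy]
  calc condEntropy μ f g
      ≤ condEntropy μ f (fun _ : X => ()) :=
        condEntropy_le_of_factorsThrough μ hf hg fun _ _ _ => rfl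
    _ = entropy μ (fun x => (f x, ())) := by rw [condEntropy, hconst, sub_zero]
    _ ≤ entropy μ f := entropy_comp_le μ hf fun a => (a, ())

theorem entropy_le_entropy_add_condEntropy (μ : Measure X) [IsFiniteMeasure μ] {f : X → α}
    {g : X → β} (hf : Measurable f) (hg : Measurable g) :
    entropy μ f ≤ entropy μ g + condEntropy μ f g := by
  rw [condEntropy, add_sub_cancel]
  exact entropy_comp_le μ (hf.prodMk hg) Prod.fst

theorem entropy_prodMk_le (μ : Measure X) [IsProbabilityMeasure μ] {f : X → α} {g : X → β}
    (hf : Measurable f) (hg : Measurable g) :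
    entropy μ (fun x => (f x, g x)) ≤ entropy μ f + entropy μ g :=
  sub_le_iff_le_add.1 (condEntropy_le_entropy μ hf hg)

omit [MeasurableSpace α] [MeasurableSingletonClass α] in
theorem condEntropy_mono_left (μ : Measure X) [IsProbabilityMeasure μ] {f : X → α} {g : X → β}
    {h : X → γ} (hg : Measurable g) (hh : Measurable h)
    (hfg : f.FactorsThrough fun x => (g x, h x)) : condEntropy μ f h ≤ condEntropy μ g h := by
  refine sub_le_sub_right (entropy_le_of_factorsThrough μ (hg.prodMk hh) fun x y hxy => ?_) _
  exact Prod.ext (hfg hxy) (Prod.ext_iff.1 hxy).2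

theorem condEntropy_prodMk_le (μ : Measure X) [IsFiniteMeasure μ] {f : X → α} {g : X → β}
    {h : X → γ} (hf : Measurable f) (hg : Measurable g) (hh : Measurable h) :
    condEntropy μ (fun x => (f x, g x)) h ≤ condEntropy μ f h + condEntropy μ g h := by
  have hassoc : entropy μ (fun x => ((f x, g x), h x)) ≤ entropy μ (fun x => (f x, g x, h x)) :=
    entropy_comp_le μ (hf.prodMk (hg.prodMk hh)) (Equiv.prodAssoc α β γ).symm
  have hdrop : condEntropy μ f (fun x => (g x, h x)) ≤ condEntropy μ f h :=
    condEntropy_le_condEntropy_comp μ hf (hg.prodMk hh) Prod.snd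
  simp only [condEntropy] at hdrop ⊢
  linarith

theorem condEntropy_finsetRestrict_le {ι : Type*} [DecidableEq ι] (μ : Measure X)
    [IsProbabilityMeasure μ] (s : Finset ι) {F : ι → X → α} (hF : ∀ i, Measurable (F i))
    {g : X → β} (hg : Measurable g) :
    condEntropy μ (fun x (i : s) => F i x) g ≤ ∑ i ∈ s, condEntropy μ (F i) g := by
  induction s using Finset.induction_on with
  | empty =>
    refine sub_nonpos.2 (entropy_le_of_factorsThrough μ hg fun x y hxy => ?_)
    exact Prod.ext (Subsingleton.elim _ _) hxy
  | insert j s hj ih =>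
    have hs : Measurable fun x (i : s) => F i x := by fun_prop
    rw [Finset.sum_insert hj]
    calc condEntropy μ (fun x (i : (insert j s : Finset ι)) => F i x) g
        ≤ condEntropy μ (fun x => (F j x, fun i : s => F i x)) g := by
          refine condEntropy_mono_left μ ((hF j).prodMk hs) hg fun x y hxy => ?_
          simp only [Prod.mk.injEq, funext_iff, Subtype.forall] at hxy
          funext ⟨i, hi⟩
          rcases Finset.mem_insert.1 hi with rfl | hi
          exacts [hxy.1.1, hxy.1.2 i hi]
      _ ≤ condEntropy μ (F j) g + condEntropy μ (fun x (i : s) => F i x) g :=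
          condEntropy_prodMk_le μ (hF j) hs hg
      _ ≤ condEntropy μ (F j) g + ∑ i ∈ s, condEntropy μ (F i) g := by gcongr

theorem condEntropy_pi_le {ι : Type*} [Fintype ι] [DecidableEq ι] (μ : Measure X)
    [IsProbabilityMeasure μ] {F : ι → X → α} (hF : ∀ i, Measurable (F i)) {g : X → β}
    (hg : Measurable g) :
    condEntropy μ (fun x i => F i x) g ≤ ∑ i, condEntropy μ (F i) g := by
  refine (condEntropy_mono_left μ ?_ hg fun x y hxy => ?_).trans
    (condEntropy_finsetRestrict_le μ Finset.univ hF hg)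
  · fun_prop
  · exact funext fun i => congrFun (Prod.ext_iff.1 hxy).1 ⟨i, Finset.mem_univ i⟩

theorem condEntropy_le_sum_condEntropy_mem_fibre (μ : Measure X)
    [IsProbabilityMeasure μ] {f : X → α} {g : X → β} (hf : Measurable f) (hg : Measurable g) :
    condEntropy μ f g ≤ ∑ a, condEntropy μ (· ∈ f ⁻¹' {a}) g := by
  classical
  have hmem : ∀ a, Measurable (· ∈ f ⁻¹' {a}) := fun a =>
    measurable_mem.2 (hf (measurableSet_singleton a))
  refine (condEntropy_mono_left μ (measurable_pi_lambda _ hmem) hg fun x y hxy => ?_).trans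
    (condEntropy_pi_le μ hmem hg)
  have hfibre : (x ∈ f ⁻¹' {f x}) = (y ∈ f ⁻¹' {f x}) := congrFun (Prod.ext_iff.1 hxy).1 (f x)
  exact (hfibre.mp rfl).symm

theorem entropy_comp_measurePreserving {T : X → X} {μ : Measure X} (hT : MeasurePreserving T μ μ)
    {f : X → α} (hf : Measurable f) : entropy μ (f ∘ T) = entropy μ f :=
  Finset.sum_congr rfl fun a _ => by
    rw [Set.preimage_comp,
      hT.measureReal_preimage (hf (measurableSet_singleton a)).nullMeasurableSet]

theorem condEntropy_comp_measurePreserving {T : X → X} {μ : Measure X}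
    (hT : MeasurePreserving T μ μ) {f : X → α} {g : X → β} (hf : Measurable f)
    (hg : Measurable g) : condEntropy μ (f ∘ T) (g ∘ T) = condEntropy μ f g :=
  congrArg₂ (· - ·) (entropy_comp_measurePreserving hT (hf.prodMk hg))
    (entropy_comp_measurePreserving hT hg)

theorem condEntropy_mem_le_binEntropy (μ : Measure X) [IsProbabilityMeasure μ] {A B : Set X}
    (hA : MeasurableSet A) (hB : MeasurableSet B) :
    condEntropy μ (· ∈ A) (· ∈ B) ≤ Real.binEntropy (μ.real (symmDiff A B)) := by
  have hAB : MeasurableSet (symmDiff A B) := hA.symmDiff hB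
  calc condEntropy μ (· ∈ A) (· ∈ B)
      ≤ condEntropy μ (· ∈ symmDiff A B) (· ∈ B) := by
        refine condEntropy_mono_left μ (measurable_mem.2 hAB) (measurable_mem.2 hB) ?_
        intro x y hxy
        simp only [Prod.mk.injEq, Set.mem_symmDiff, eq_iff_iff] at hxy ⊢
        tauto
    _ ≤ entropy μ (· ∈ symmDiff A B) :=
        condEntropy_le_entropy μ (measurable_mem.2 hAB) (measurable_mem.2 hB)
    _ = Real.binEntropy (μ.real (symmDiff A B)) := entropy_mem μ hAB

theorem exists_condEntropy_mem_lt (μ : Measure X) [IsProbabilityMeasure μ] {𝒜 : Set (Set X)}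
    (h𝒜 : μ.MeasureDense 𝒜) {A : Set X} (hA : MeasurableSet A) {ε : ℝ} (hε : 0 < ε) :
    ∃ B ∈ 𝒜, condEntropy μ (· ∈ A) (· ∈ B) < ε := by
  have hlim : Filter.Tendsto Real.binEntropy (nhds 0) (nhds 0) := by
    simpa using Real.binEntropy_continuous.tendsto 0
  obtain ⟨δ, hδ, hball⟩ := Metric.eventually_nhds_iff.1 (hlim.eventually (gt_mem_nhds hε))
  obtain ⟨B, hB, hAB⟩ := h𝒜.approx A hA (measure_ne_top μ A) δ hδ
  have hreal : μ.real (symmDiff A B) < δ := by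
    simpa [measureReal_def, hδ.le] using ENNReal.toReal_lt_of_lt_ofReal hAB
  refine ⟨B, hB, (condEntropy_mem_le_binEntropy μ hA (h𝒜.measurable B hB)).trans_lt (hball ?_)⟩
  simpa [abs_of_nonneg measureReal_nonneg] using hreal

end Entropy

section Itinerary

variable {α : Type*}

/-- The first `n` symbols `f x, f (T x), …, f (T^(n-1) x)` seen along the orbit of `x`. Its fibres
are the cells of the join `P ∨ ⋯ ∨ T^{-(n-1)}P` of the partition `P` into the fibres of `f`. -/
def itinerary (T : X → X) (f : X → α) (n : ℕ) (x : X) : Fin n → α :=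
  fun i => f (T^[i] x)

/-- The events that depend on finitely many symbols of the itinerary. -/
def itineraryEvents (T : X → X) (f : X → α) : Set (Set X) :=
  {B | ∃ n, ∃ S : Set (Fin n → α), itinerary T f n ⁻¹' S = B}

/-- The partition into the fibres of `f` is a (one-sided) generator for `T`: every measurable set
lies in the `σ`-algebra generated by the symbols `f (T^n x)`. -/
def IsGenerator [MeasurableSpace α] (T : X → X) (f : X → α) : Prop :=
  ‹MeasurableSpace X› ≤ ⨆ n : ℕ, MeasurableSpace.comap (f ∘ T^[n]) ‹_›

variable {T : X → X} {f : X → α}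

omit [MeasurableSpace X] in
theorem itinerary_comp_iterate_factorsThrough {i n m : ℕ} (h : i + n ≤ m) :
    (itinerary T f n ∘ T^[i]).FactorsThrough (itinerary T f m) := fun x y hxy => by
  funext j
  simpa [itinerary, ← Function.iterate_add_apply, add_comm] using congrFun hxy ⟨i + j, by omega⟩

omit [MeasurableSpace X] in
theorem itinerary_factorsThrough {n m : ℕ} (h : n ≤ m) :
    (itinerary T f n).FactorsThrough (itinerary T f m) :=
  itinerary_comp_iterate_factorsThrough (i := 0) (by omega)

omit [MeasurableSpace X] in
theorem itinerary_add_factorsThrough (m n : ℕ) :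
    (itinerary T f (m + n)).FactorsThrough
      fun x => (itinerary T f m x, itinerary T f n (T^[m] x)) := fun x y hxy => by
  obtain ⟨hfirst, hlast⟩ := Prod.ext_iff.1 hxy
  funext i
  induction i using Fin.addCases with
  | left i => exact congrFun hfirst i
  | right i => simpa [itinerary, ← Function.iterate_add_apply, add_comm] using congrFun hlast i

omit [MeasurableSpace X] in
theorem exists_itinerary_preimage_eq_of_le {n m : ℕ} (h : n ≤ m) (S : Set (Fin n → α)) :
    ∃ S' : Set (Fin m → α), itinerary T f m ⁻¹' S' = itinerary T f n ⁻¹' S :=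
  ⟨(fun w i => w (Fin.castLE h i)) ⁻¹' S, rfl⟩

omit [MeasurableSpace X] in
theorem isSetAlgebra_itineraryEvents : IsSetAlgebra (itineraryEvents T f) where
  empty_mem := ⟨0, ∅, rfl⟩
  compl_mem := by
    rintro _ ⟨n, S, rfl⟩
    exact ⟨n, Sᶜ, rfl⟩
  union_mem := by
    rintro _ _ ⟨n, S, rfl⟩ ⟨m, S', rfl⟩
    obtain ⟨U, hU⟩ := exists_itinerary_preimage_eq_of_le (T := T) (f := f) (le_max_left n m) S
    obtain ⟨V, hV⟩ := exists_itinerary_preimage_eq_of_le (T := T) (f := f) (le_max_right n m) S'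
    exact ⟨max n m, U ∪ V, by rw [Set.preimage_union, hU, hV]⟩

variable [MeasurableSpace α]

theorem measurable_itinerary (hT : Measurable T) (hf : Measurable f) (n : ℕ) :
    Measurable (itinerary T f n) :=
  measurable_pi_lambda _ fun i => hf.comp (hT.iterate i)

theorem generateFrom_itineraryEvents [Finite α] [MeasurableSingletonClass α] (hT : Measurable T)
    (hf : Measurable f) (hgen : IsGenerator T f) :
    MeasurableSpace.generateFrom (itineraryEvents T f) = ‹MeasurableSpace X› := by
  refine le_antisymm (MeasurableSpace.generateFrom_le ?_) (hgen.trans (iSup_le fun n => ?_))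
  · rintro _ ⟨n, S, rfl⟩
    exact measurable_itinerary hT hf n S.toFinite.measurableSet
  · rintro _ ⟨S, -, rfl⟩
    exact MeasurableSpace.measurableSet_generateFrom ⟨n + 1, {w | w (Fin.last n) ∈ S}, rfl⟩

theorem measureDense_itineraryEvents [Finite α] [MeasurableSingletonClass α] {μ : Measure X}
    [IsFiniteMeasure μ] (hT : Measurable T) (hf : Measurable f) (hgen : IsGenerator T f) :
    μ.MeasureDense (itineraryEvents T f) :=
  .of_generateFrom_isSetAlgebra_finite μ isSetAlgebra_itineraryEvents
    (generateFrom_itineraryEvents hT hf hgen).symm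

theorem measurePreserving_of_forall_itinerary [Finite α] [MeasurableSingletonClass α]
    {μ : Measure X} [IsFiniteMeasure μ] (hT : Measurable T) (hf : Measurable f)
    (hgen : IsGenerator T f)
    (h : ∀ n w, μ (T ⁻¹' (itinerary T f n ⁻¹' {w})) = μ (itinerary T f n ⁻¹' {w})) :
    MeasurePreserving T μ μ := by
  have hfin : IsFiniteMeasure (μ.map T) := inferInstance
  refine ⟨hT, ext_of_generate_finite _ (generateFrom_itineraryEvents hT hf hgen).symm
    (fun A hA B hB _ => isSetAlgebra_itineraryEvents.inter_mem hA hB) ?_ (by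
      rw [Measure.map_apply hT .univ, Set.preimage_univ])⟩
  rintro _ ⟨n, S, rfl⟩
  have hn := measurable_itinerary hT hf n
  have hlaw : (μ.map T).map (itinerary T f n) = μ.map (itinerary T f n) :=
    Measure.ext_of_singleton fun w => by
      have hw := measurableSet_singleton w
      rw [Measure.map_apply hn hw, Measure.map_apply hn hw, Measure.map_apply hT (hn hw), h]
  have hS : MeasurableSet S := S.toFinite.measurableSet
  rw [← Measure.map_apply hn hS, ← Measure.map_apply hn hS, hlaw]

end Itinerary

section EntropyRate

open Filter

variable {α β : Type*} [Fintype α] [Fintype β]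

/-- The entropy `h(T, f)` of `T` relative to the partition into the fibres of `f`, taken as a
`liminf` to match `ksEntropy`. -/
noncomputable def entropyRate (T : X → X) (μ : Measure X) (f : X → α) : ℝ :=
  liminf (fun n : ℕ => entropy μ (itinerary T f n) / n) atTop

variable [MeasurableSpace α] [MeasurableSingletonClass α] [MeasurableSpace β]
  [MeasurableSingletonClass β] {T : X → X} {μ : Measure X} [IsProbabilityMeasure μ]

theorem subadditive_entropy_itinerary (hT : MeasurePreserving T μ μ) {f : X → α}
    (hf : Measurable f) : Subadditive fun n => entropy μ (itinerary T f n) := fun m n => by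
  have hit := measurable_itinerary hT.measurable hf
  calc entropy μ (itinerary T f (m + n))
      ≤ entropy μ (fun x => (itinerary T f m x, (itinerary T f n ∘ T^[m]) x)) :=
        entropy_le_of_factorsThrough μ ((hit m).prodMk ((hit n).comp (hT.iterate m).measurable))
          (itinerary_add_factorsThrough m n)
    _ ≤ entropy μ (itinerary T f m) + entropy μ (itinerary T f n ∘ T^[m]) :=
        entropy_prodMk_le μ (hit m) ((hit n).comp (hT.iterate m).measurable)
    _ = entropy μ (itinerary T f m) + entropy μ (itinerary T f n) := by
        rw [entropy_comp_measurePreserving (hT.iterate m) (hit n)]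

theorem tendsto_entropyRate (hT : MeasurePreserving T μ μ) {f : X → α} (hf : Measurable f) :
    Tendsto (fun n : ℕ => entropy μ (itinerary T f n) / n) atTop (nhds (entropyRate T μ f)) := by
  have hbdd : BddBelow (Set.range fun n : ℕ => entropy μ (itinerary T f n) / n) :=
    ⟨0, Set.forall_mem_range.2 fun n => div_nonneg (entropy_nonneg μ _) n.cast_nonneg⟩
  have hlim := (subadditive_entropy_itinerary hT hf).tendsto_lim hbdd
  rwa [entropyRate, hlim.liminf_eq]

theorem condEntropy_itinerary_le (hT : MeasurePreserving T μ μ) {f : X → α} {g : X → β}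
    (hf : Measurable f) (hg : Measurable g) (n k : ℕ) :
    condEntropy μ (itinerary T g k) (itinerary T f (n + k))
      ≤ k * condEntropy μ g (itinerary T f n) := by
  have hit := measurable_itinerary hT.measurable hf
  have hgi : ∀ i : Fin k, Measurable (g ∘ T^[i]) := fun i => hg.comp (hT.iterate i).measurable
  calc condEntropy μ (itinerary T g k) (itinerary T f (n + k))
      ≤ ∑ i : Fin k, condEntropy μ (g ∘ T^[i]) (itinerary T f (n + k)) :=
        condEntropy_pi_le μ hgi (hit _)
    _ ≤ ∑ i : Fin k, condEntropy μ (g ∘ T^[i]) (itinerary T f n ∘ T^[i]) :=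
        Finset.sum_le_sum fun i _ => condEntropy_le_of_factorsThrough μ (hgi i) (hit _)
          (itinerary_comp_iterate_factorsThrough (by omega))
    _ = ∑ _i : Fin k, condEntropy μ g (itinerary T f n) :=
        Finset.sum_congr rfl fun i _ =>
          condEntropy_comp_measurePreserving (hT.iterate i) hg (hit n)
    _ = k * condEntropy μ g (itinerary T f n) := by simp

theorem entropyRate_le_add_condEntropy (hT : MeasurePreserving T μ μ) {f : X → α} {g : X → β}
    (hf : Measurable f) (hg : Measurable g) (n : ℕ) :
    entropyRate T μ g ≤ entropyRate T μ f + condEntropy μ g (itinerary T f n) := by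
  have hentropy : ∀ k, entropy μ (itinerary T g k) ≤ entropy μ (itinerary T f n)
      + entropy μ (itinerary T f k) + k * condEntropy μ g (itinerary T f n) := fun k =>
    calc entropy μ (itinerary T g k)
        ≤ entropy μ (itinerary T f (n + k))
            + condEntropy μ (itinerary T g k) (itinerary T f (n + k)) :=
          entropy_le_entropy_add_condEntropy μ (measurable_itinerary hT.measurable hg k)
            (measurable_itinerary hT.measurable hf (n + k))
      _ ≤ _ := add_le_add (subadditive_entropy_itinerary hT hf n k)
          (condEntropy_itinerary_le hT hf hg n k)
  have hlim : Tendsto (fun k : ℕ => entropy μ (itinerary T f n) / (k : ℝ)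
      + entropy μ (itinerary T f k) / k + condEntropy μ g (itinerary T f n)) atTop
      (nhds (0 + entropyRate T μ f + condEntropy μ g (itinerary T f n))) :=
    ((tendsto_const_div_atTop_nhds_zero_nat _).add (tendsto_entropyRate hT hf)).add_const _
  rw [zero_add] at hlim
  refine le_of_tendsto_of_tendsto (tendsto_entropyRate hT hg) hlim ?_
  filter_upwards [eventually_gt_atTop 0] with k hk
  have hk : (0 : ℝ) < k := by exact_mod_cast hk
  rw [div_le_iff₀ hk]
  calc entropy μ (itinerary T g k) ≤ _ := hentropy k
    _ = _ := by field_simp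

theorem exists_condEntropy_itinerary_mem_lt (hT : Measurable T) {f : X → α} (hf : Measurable f)
    (hgen : IsGenerator T f) {A : Set X} (hA : MeasurableSet A) {ε : ℝ} (hε : 0 < ε) :
    ∃ n, condEntropy μ (· ∈ A) (itinerary T f n) < ε := by
  obtain ⟨_, ⟨n, S, rfl⟩, hS⟩ :=
    exists_condEntropy_mem_lt μ (measureDense_itineraryEvents hT hf hgen) hA hε
  exact ⟨n, (condEntropy_le_condEntropy_comp μ (measurable_mem.2 hA)
    (measurable_itinerary hT hf n) (· ∈ S)).trans_lt hS⟩

theorem exists_condEntropy_itinerary_le (hT : Measurable T) {f : X → α} (hf : Measurable f)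
    (hgen : IsGenerator T f) {g : X → β} (hg : Measurable g) {ε : ℝ} (hε : 0 < ε) :
    ∃ n, condEntropy μ g (itinerary T f n) ≤ ε := by
  have hit := measurable_itinerary hT hf
  have hfibre : ∀ b, MeasurableSet (g ⁻¹' {b}) := fun b => hg (measurableSet_singleton b)
  have : Nonempty β := μ.nonempty_of_neZero.map g
  choose N hN using fun b => exists_condEntropy_itinerary_mem_lt (μ := μ) hT hf hgen (hfibre b)
    (show 0 < ε / Fintype.card β by positivity)
  refine ⟨Finset.univ.sup N, ?_⟩
  calc condEntropy μ g (itinerary T f (Finset.univ.sup N))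
      ≤ ∑ b, condEntropy μ (· ∈ g ⁻¹' {b}) (itinerary T f (Finset.univ.sup N)) :=
        condEntropy_le_sum_condEntropy_mem_fibre μ hg (hit _)
    _ ≤ ∑ b, condEntropy μ (· ∈ g ⁻¹' {b}) (itinerary T f (N b)) :=
        Finset.sum_le_sum fun b _ => condEntropy_le_of_factorsThrough μ
          (measurable_mem.2 (hfibre b)) (hit _)
          (itinerary_factorsThrough (Finset.le_sup (Finset.mem_univ b)))
    _ ≤ ∑ _b : β, ε / Fintype.card β := Finset.sum_le_sum fun b _ => (hN b).le
    _ = ε := by simp [mul_div_cancel₀]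

theorem entropyRate_le_of_isGenerator (hT : MeasurePreserving T μ μ) {f : X → α}
    (hf : Measurable f) (hgen : IsGenerator T f) {g : X → β} (hg : Measurable g) :
    entropyRate T μ g ≤ entropyRate T μ f := by
  refine le_of_forall_pos_le_add fun ε hε => ?_
  obtain ⟨n, hn⟩ := exists_condEntropy_itinerary_le (μ := μ) hT.measurable hf hgen hg hε
  linarith [entropyRate_le_add_condEntropy hT hf hg n]

end EntropyRate

section KolmogorovSinai

variable {α : Type*} {T : X → X} {μ : Measure X}

theorem IsFinPartition.existsUnique_mem {P : Finset (Set X)} (hP : IsFinPartition P) (x : X) :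
    ∃! A : P, x ∈ A.1 := by
  obtain ⟨-, hdisj, hcover⟩ := hP
  obtain ⟨A, hA, hxA⟩ := Set.mem_sUnion.1 (hcover ▸ Set.mem_univ x)
  refine ⟨⟨A, hA⟩, hxA, fun B hxB => Subtype.ext ?_⟩
  exact hdisj.elim_set B.2 hA x hxB hxA

/-- The cell of the finite partition `P` that contains a given point; it turns a partition into a
finite-valued map. -/
noncomputable def IsFinPartition.cell {P : Finset (Set X)} (hP : IsFinPartition P) (x : X) : P :=
  (hP.existsUnique_mem x).choose

theorem IsFinPartition.cell_eq_iff {P : Finset (Set X)} (hP : IsFinPartition P) {x : X} {A : P} :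
    hP.cell x = A ↔ x ∈ A.1 := by
  obtain ⟨hmem, hunique⟩ := (hP.existsUnique_mem x).choose_spec
  exact ⟨fun h => h ▸ hmem, fun h => (hunique A h).symm⟩

theorem IsFinPartition.measurable_cell {P : Finset (Set X)} (hP : IsFinPartition P) :
    Measurable[_, ⊤] hP.cell := by
  let _ : MeasurableSpace P := ⊤
  refine measurable_to_countable' fun A => ?_
  convert! hP.1 A A.2 using 1
  ext x
  exact hP.cell_eq_iff

theorem IsFinPartition.joinEntropy_eq {P : Finset (Set X)} (hP : IsFinPartition P) (k : ℕ) :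
    joinEntropy T μ P k = entropy μ (itinerary T hP.cell k) := by
  have hcell : ∀ a : Fin k → P,
      itinerary T hP.cell k ⁻¹' {a} = ⋂ i : Fin k, T^[i] ⁻¹' (a i).1 := fun a => by
    ext x
    simp [itinerary, funext_iff, hP.cell_eq_iff]
  rw [joinEntropy, ← Finset.sum_neg_distrib]
  refine (Finset.sum_bij (fun (a : Fin k → P) _ i => (a i).1) ?_ ?_ ?_ ?_).symm
  · exact fun a _ => Fintype.mem_piFinset.2 fun i => (a i).2
  · exact fun a _ b _ h => funext fun i => Subtype.ext (congrFun h i)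
  · exact fun A hA => ⟨fun i => ⟨A i, Fintype.mem_piFinset.1 hA i⟩, Finset.mem_univ _, rfl⟩
  · intro a _
    rw [hcell, Real.negMulLog, neg_mul, measureReal_def]

theorem ksEntropy_eq_iSup_entropyRate_cell :
    ksEntropy T μ
      = ⨆ P : {P : Finset (Set X) // IsFinPartition P}, entropyRate T μ P.2.cell :=
  iSup_congr fun P => by simp only [entropyRate, P.2.joinEntropy_eq]

variable [Fintype α]

open Classical in
/-- The partition of `X` into the fibres of `f`; the empty set is a cell if `f` is not onto. -/
noncomputable def fibres (f : X → α) : Finset (Set X) :=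
  Finset.univ.image fun a => f ⁻¹' {a}

variable [MeasurableSpace α] [MeasurableSingletonClass α] {f : X → α}

theorem isFinPartition_fibres (hf : Measurable f) : IsFinPartition (fibres f) := by
  simp only [IsFinPartition, fibres, Finset.coe_image, Finset.coe_univ, Set.image_univ,
    Finset.mem_image, Finset.mem_univ, true_and, forall_exists_index, forall_apply_eq_imp_iff]
  refine ⟨fun a => hf (measurableSet_singleton a), ?_, ?_⟩
  · exact (pairwise_disjoint_fiber f).range_pairwise
  · exact Set.eq_univ_of_forall fun x => ⟨_, ⟨f x, rfl⟩, rfl⟩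

theorem cell_fibres_eq_iff (hf : Measurable f) {x y : X} :
    (isFinPartition_fibres hf).cell x = (isFinPartition_fibres hf).cell y ↔ f x = f y := by
  have hcell : ∀ z, ((isFinPartition_fibres hf).cell z).1 = f ⁻¹' {f z} := fun z => by
    have hz : f ⁻¹' {f z} ∈ fibres f := Finset.mem_image_of_mem _ (Finset.mem_univ (f z))
    exact congrArg Subtype.val (((isFinPartition_fibres hf).cell_eq_iff (A := ⟨_, hz⟩)).2 rfl)
  rw [IsFinPartition.cell_eq_iff, hcell y]
  rfl

variable [IsProbabilityMeasure μ]

theorem entropyRate_cell_fibres (hT : Measurable T) (hf : Measurable f) :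
    entropyRate T μ (isFinPartition_fibres hf).cell = entropyRate T μ f := by
  let _ : MeasurableSpace (fibres f) := ⊤
  have hcell := (isFinPartition_fibres hf).measurable_cell
  simp only [entropyRate]
  congr! 3 with n
  refine entropy_congr μ (measurable_itinerary hT hcell n) (measurable_itinerary hT hf n)
    fun x y => ?_
  simp only [itinerary, funext_iff, cell_fibres_eq_iff hf]

theorem ksEntropy_eq_entropyRate_of_isGenerator (hT : MeasurePreserving T μ μ) (hf : Measurable f)
    (hgen : IsGenerator T f) : ksEntropy T μ = entropyRate T μ f := by
  have hle : ∀ P : {P : Finset (Set X) // IsFinPartition P},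
      entropyRate T μ P.2.cell ≤ entropyRate T μ f := fun P =>
    let _ : MeasurableSpace P.1 := ⊤
    entropyRate_le_of_isGenerator hT hf hgen P.2.measurable_cell
  have : Nonempty {P : Finset (Set X) // IsFinPartition P} := ⟨_, isFinPartition_fibres hf⟩
  rw [ksEntropy_eq_iSup_entropyRate_cell]
  refine le_antisymm (ciSup_le hle) ?_
  rw [← entropyRate_cell_fibres hT.measurable hf]
  exact le_ciSup (f := fun P : {P : Finset (Set X) // IsFinPartition P} =>
    entropyRate T μ P.2.cell) ⟨_, Set.forall_mem_range.2 hle⟩ ⟨_, isFinPartition_fibres hf⟩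

end KolmogorovSinai

section WordSums

variable {D R : Type*} [Fintype D]

theorem sum_fin_succ_pi [AddCommMonoid R] {n : ℕ} (F : (Fin (n + 1) → D) → R) :
    ∑ v, F v = ∑ d, ∑ w, F (Fin.cons d w) := by
  rw [← (Fin.consEquiv fun _ => D).sum_comp, Fintype.sum_prod_type]
  rfl

theorem sum_prod_of_tail_eq [CommSemiring R] [DecidableEq D] {p : D → R} (hpsum : ∑ d, p d = 1)
    {n : ℕ} (w : Fin n → D) :
    ∑ v : Fin (n + 1) → D with Fin.tail v = w, ∏ i, p (v i) = ∏ i, p (w i) := by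
  rw [Finset.sum_filter, sum_fin_succ_pi]
  simp [Fin.prod_univ_succ, ← Finset.sum_mul, hpsum]

theorem sum_negMulLog_prod {p : D → ℝ} (hpsum : ∑ d, p d = 1) (n : ℕ) :
    ∑ w : Fin n → D, Real.negMulLog (∏ i, p (w i)) = n * ∑ d, Real.negMulLog (p d) := by
  induction n with
  | zero => simp
  | succ n ih =>
    have hprod : ∑ w : Fin n → D, ∏ i, p (w i) = 1 := by rw [← Fintype.sum_pow, hpsum, one_pow]
    calc ∑ v : Fin (n + 1) → D, Real.negMulLog (∏ i, p (v i))
        = ∑ d, ∑ w : Fin n → D, ((∏ i, p (w i)) * Real.negMulLog (p d)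
            + p d * Real.negMulLog (∏ i, p (w i))) := by
          simp only [sum_fin_succ_pi, Fin.prod_univ_succ, Fin.cons_zero, Fin.cons_succ,
            Real.negMulLog_mul]
      _ = (∑ w : Fin n → D, ∏ i, p (w i)) * ∑ d, Real.negMulLog (p d)
            + (∑ d, p d) * ∑ w : Fin n → D, Real.negMulLog (∏ i, p (w i)) := by
          simp only [Finset.sum_add_distrib, ← Finset.sum_mul, ← Finset.mul_sum]
      _ = (n + 1 : ℕ) * ∑ d, Real.negMulLog (p d) := by
          rw [hprod, hpsum, ih]
          push_cast
          ring

end WordSums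

section Bernoulli

variable {D : Type*}

/-- The one-sided shift on sequences. -/
def leftShift (x : ℕ → D) : ℕ → D :=
  fun k => x (k + 1)

theorem leftShift_iterate_apply (n : ℕ) (x : ℕ → D) (k : ℕ) : leftShift^[n] x k = x (k + n) := by
  induction n generalizing x with
  | zero => rfl
  | succ n ih => rw [Function.iterate_succ_apply, ih, leftShift, add_assoc]

theorem itinerary_leftShift (n : ℕ) (x : ℕ → D) :
    itinerary leftShift (fun x => x 0) n x = fun i : Fin n => x i := by
  funext i
  rw [itinerary, leftShift_iterate_apply, zero_add]

variable [MeasurableSpace D] {p : D → ℝ} {μ : Measure (ℕ → D)}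

/-- `μ` is the Bernoulli measure on `D^ℕ` with weights `p`, described by its values on cylinders. -/
def IsBernoulli (μ : Measure (ℕ → D)) (p : D → ℝ) : Prop :=
  ∀ (n : ℕ) (w : Fin n → D),
    μ {x | ∀ i : Fin n, x i = w i} = ENNReal.ofReal (∏ i, p (w i))

theorem measurable_leftShift : Measurable (leftShift : (ℕ → D) → ℕ → D) :=
  measurable_pi_lambda _ fun k => measurable_pi_apply (k + 1)

theorem isGenerator_leftShift : IsGenerator leftShift (fun x : ℕ → D => x 0) := by
  refine iSup_mono fun n => le_of_eq (congrArg (MeasurableSpace.comap · _) (funext fun x => ?_))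
  rw [Function.comp_apply, leftShift_iterate_apply, zero_add]

theorem IsBernoulli.measureReal_itinerary (hμ : IsBernoulli μ p) (hp : ∀ d, 0 ≤ p d) {n : ℕ}
    (w : Fin n → D) : μ.real (itinerary leftShift (fun x => x 0) n ⁻¹' {w}) = ∏ i, p (w i) := by
  have hcyl : itinerary leftShift (fun x => x 0) n ⁻¹' {w} = {x | ∀ i : Fin n, x i = w i} := by
    ext x
    simp [itinerary_leftShift, funext_iff]
  rw [hcyl, measureReal_def, hμ, ENNReal.toReal_ofReal (Finset.prod_nonneg fun i _ => hp (w i))]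

variable [Fintype D]

theorem IsBernoulli.entropyRate_leftShift (hμ : IsBernoulli μ p) (hp : ∀ d, 0 ≤ p d)
    (hpsum : ∑ d, p d = 1) :
    entropyRate leftShift μ (fun x => x 0) = ∑ d, Real.negMulLog (p d) := by
  have hentropy : ∀ n, entropy μ (itinerary leftShift (fun x => x 0) n)
      = n * ∑ d, Real.negMulLog (p d) := fun n => by
    simp only [entropy, hμ.measureReal_itinerary hp, sum_negMulLog_prod hpsum]
  refine (tendsto_const_nhds.congr' ?_).liminf_eq
  filter_upwards [Filter.eventually_ne_atTop 0] with n hn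
  rw [hentropy, mul_div_cancel_left₀ _ (Nat.cast_ne_zero.2 hn)]

theorem IsBernoulli.measurePreserving_leftShift [MeasurableSingletonClass D] [IsFiniteMeasure μ]
    (hμ : IsBernoulli μ p) (hp : ∀ d, 0 ≤ p d) (hpsum : ∑ d, p d = 1) :
    MeasurePreserving leftShift μ μ := by
  classical
  have hf : Measurable fun x : ℕ → D => x 0 := measurable_pi_apply 0
  refine measurePreserving_of_forall_itinerary measurable_leftShift hf isGenerator_leftShift
    fun n w => (measureReal_eq_measureReal_iff).1 ?_
  have htail : leftShift ⁻¹' (itinerary leftShift (fun x : ℕ → D => x 0) n ⁻¹' {w})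
      = (Fin.tail ∘ itinerary leftShift (fun x => x 0) (n + 1)) ⁻¹' {w} := rfl
  rw [htail, measureReal_preimage_comp_singleton μ (measurable_itinerary measurable_leftShift hf _)]
  simp only [hμ.measureReal_itinerary hp]
  exact sum_prod_of_tail_eq hpsum w

end Bernoulli

/-- The Kolmogorov–Sinai entropy of the shift on `D^ℕ` with respect to the
Bernoulli measure `p^ℕ` (characterized by its values on cylinders) equals the Shannon
entropy `H(p) = −∑_{d ∈ D} p d log (p d)`. -/
theorem stmt12 {D : Type*} [Fintype D] [Nonempty D]
    [MeasurableSpace D] [DiscreteMeasurableSpace D]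
    (p : D → ℝ) (hp : ∀ d, 0 ≤ p d) (hpsum : ∑ d, p d = 1)
    (μ : Measure (ℕ → D)) [IsProbabilityMeasure μ]
    (hcyl : ∀ (k : ℕ) (w : Fin k → D),
      μ {x | ∀ i : Fin k, x (i : ℕ) = w i} = ENNReal.ofReal (∏ i, p (w i)))
    (shift : (ℕ → D) → (ℕ → D)) (hshift : ∀ x k, shift x k = x (k + 1)) :
    ksEntropy shift μ = -∑ d, p d * Real.log (p d) := by
  obtain rfl : shift = leftShift := funext fun x => funext (hshift x)
  have hμ : IsBernoulli μ p := hcyl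
  calc ksEntropy leftShift μ
      = entropyRate leftShift μ (fun x => x 0) :=
        ksEntropy_eq_entropyRate_of_isGenerator (hμ.measurePreserving_leftShift hp hpsum)
          (measurable_pi_apply 0) isGenerator_leftShift
    _ = ∑ d, Real.negMulLog (p d) := hμ.entropyRate_leftShift hp hpsum
    _ = -∑ d, p d * Real.log (p d) := by simp [Real.negMulLog, Finset.sum_neg_distrib]
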